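/- Let G be a finite abelian group, let f, g : G → ℝ, and suppose ρ₂(f) = ρ₂(g) and ρ_k(f) = ρ_k(g) for some k ≥ 2. Let S = {χ : f̂(χ) ≠ 0}. Then S = {χ : ĝ(χ) ≠ 0}, and for any characters x₁,...,x_m, y₁,...,y_n ∈ S with x₁···x_m = y₁···y_n and m + n = k, we have ∏ᵢ f̂(xᵢ)/ĝ(xᵢ) = ∏ⱼ f̂(yⱼ)/ĝ(yⱼ). -/

import Mathlib

open Finset

/-- The `n`-th order autocorrelation of a real-valued `f : G → ℝ`. -/
noncomputable def rho {G : Type*} [AddCommGroup G] [Fintype G] (n : ℕ) (f : G → ℝ)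
    (t : Fin (n - 1) → G) : ℝ :=
  ∑ x, f x * ∏ i, f (x + t i)

/-- The Fourier transform of a real-valued `f : G → ℝ` at an additive character `χ`. -/
noncomputable def fhat {G : Type*} [AddCommGroup G] [Fintype G] (f : G → ℝ)
    (χ : AddChar G ℂ) : ℂ :=
  ∑ x, (f x : ℂ) * (starRingEnd ℂ) (χ x)

/-!
For characters `χ₁, …, χₙ`, the Fourier coefficient of `ρ_{n+1}(f)` on `Gⁿ` at `(χ₁, …, χₙ)` is
`f̂((χ₁ ⋯ χₙ)⁻¹) f̂(χ₁) ⋯ f̂(χₙ)`, so `ρ_k(f)` determines the products `f̂(χ₁) ⋯ f̂(χ_k)` with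
`χ₁ ⋯ χ_k = 1`. As `f` is real, `f̂(χ⁻¹)` is the conjugate of `f̂(χ)`; hence `ρ₂(f)` determines
`|f̂|`, and the ratio `u = f̂ / ĝ` has modulus one on the common support, so that
`u(χ⁻¹) = u(χ)⁻¹`. Evaluating at the characters `x₁, …, x_m, y₁⁻¹, …, yₙ⁻¹`, whose product is `1`,
gives `∏ u(xᵢ) ∏ u(yⱼ)⁻¹ = 1`.
-/

open scoped ComplexConjugate

section Fourier

variable {G : Type*} [AddCommGroup G] [Fintype G]

lemma fhat_inv (f : G → ℝ) (χ : AddChar G ℂ) : fhat f χ⁻¹ = conj (fhat f χ) := by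
  simp [fhat, AddChar.map_neg_eq_conj]

lemma fhat_comp_add_left (f : G → ℝ) (x : G) (χ : AddChar G ℂ) :
    fhat (fun t ↦ f (x + t)) χ = χ x * fhat f χ := by
  have hconj (t : G) : conj (χ t) = χ x * conj (χ (x + t)) := by
    rw [← AddChar.map_neg_eq_conj, ← AddChar.map_neg_eq_conj, ← AddChar.map_add_eq_mul]
    congr 1
    abel
  rw [fhat, fhat, mul_sum]
  exact Fintype.sum_equiv (Equiv.addLeft x) _ _ fun t ↦ by
    rw [hconj, mul_left_comm, Equiv.coe_addLeft]

lemma sum_rho_succ_mul_prod_conj (f : G → ℝ) (n : ℕ) (χ : Fin n → AddChar G ℂ) :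
    ∑ t : Fin n → G, (rho (n + 1) f t : ℂ) * ∏ i, conj (χ i (t i)) =
      fhat f (∏ i, χ i)⁻¹ * ∏ i, fhat f (χ i) := by
  classical
  calc ∑ t : Fin n → G, (rho (n + 1) f t : ℂ) * ∏ i, conj (χ i (t i))
      = ∑ x, (f x : ℂ) * ∑ t : Fin n → G, ∏ i, (f (x + t i) : ℂ) * conj (χ i (t i)) := by
        simp only [rho, Complex.ofReal_sum, Complex.ofReal_mul,
          Complex.ofReal_prod, sum_mul, mul_sum, prod_mul_distrib, mul_assoc]
        exact sum_comm
    _ = ∑ x, (f x : ℂ) * ∏ i, fhat (fun t ↦ f (x + t)) (χ i) := by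
        simp only [fhat, Fintype.prod_sum]
    _ = ∑ x, (f x : ℂ) * conj ((∏ i, χ i)⁻¹ x) * ∏ i, fhat f (χ i) := by
        simp only [fhat_comp_add_left, prod_mul_distrib, AddChar.inv_apply,
          AddChar.map_neg_eq_conj, Complex.conj_conj, AddChar.prod_apply, mul_assoc]
    _ = fhat f (∏ i, χ i)⁻¹ * ∏ i, fhat f (χ i) := by
        rw [← sum_mul, fhat]

end Fourier

section EqualAutocorrelations

variable {G : Type*} [AddCommGroup G] [Fintype G] {f g : G → ℝ}

lemma prod_fhat_eq_of_rho_eq {k : ℕ} (h : rho k f = rho k g) {χ : Fin k → AddChar G ℂ}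
    (hχ : ∏ i, χ i = 1) : ∏ i, fhat f (χ i) = ∏ i, fhat g (χ i) := by
  cases k with
  | zero => simp only [Fin.prod_univ_zero]
  | succ n =>
    rw [Fin.prod_univ_succ] at hχ
    simp only [Fin.prod_univ_succ, eq_inv_of_mul_eq_one_left hχ, ← sum_rho_succ_mul_prod_conj, h]

lemma norm_fhat_eq_of_rho_two_eq (h : rho 2 f = rho 2 g) (χ : AddChar G ℂ) :
    ‖fhat f χ‖ = ‖fhat g χ‖ := by
  have hprod : fhat f χ * conj (fhat f χ) = fhat g χ * conj (fhat g χ) := by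
    simpa [fhat_inv] using prod_fhat_eq_of_rho_eq h (χ := ![χ, χ⁻¹]) (by simp)
  simp only [Complex.mul_conj'] at hprod
  rw [← sq_eq_sq₀ (norm_nonneg _) (norm_nonneg _)]
  exact_mod_cast hprod

lemma fhat_ne_zero_iff_of_rho_two_eq (h : rho 2 f = rho 2 g) (χ : AddChar G ℂ) :
    fhat f χ ≠ 0 ↔ fhat g χ ≠ 0 := by
  rw [← norm_ne_zero_iff, norm_fhat_eq_of_rho_two_eq h, norm_ne_zero_iff]

lemma fhat_inv_div_fhat_inv_of_rho_two_eq (h : rho 2 f = rho 2 g) {χ : AddChar G ℂ}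
    (hχ : fhat g χ ≠ 0) : fhat f χ⁻¹ / fhat g χ⁻¹ = (fhat f χ / fhat g χ)⁻¹ := by
  have hnorm : ‖fhat f χ / fhat g χ‖ = 1 := by
    rw [norm_div, norm_fhat_eq_of_rho_two_eq h, div_self (norm_ne_zero_iff.mpr hχ)]
  rw [fhat_inv, fhat_inv, ← map_div₀, Complex.inv_eq_conj hnorm]

lemma prod_fhat_div_fhat_eq_one_of_rho_eq {k : ℕ} (h : rho k f = rho k g)
    {χ : Fin k → AddChar G ℂ} (hχ : ∏ i, χ i = 1) (hg : ∀ i, fhat g (χ i) ≠ 0) :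
    ∏ i, fhat f (χ i) / fhat g (χ i) = 1 := by
  rw [prod_div_distrib, prod_fhat_eq_of_rho_eq h hχ, div_self (prod_ne_zero_iff.mpr fun i _ ↦ hg i)]

end EqualAutocorrelations

theorem two_and_k_lemma {G : Type*} [AddCommGroup G] [Fintype G] (f g : G → ℝ)
    (k : ℕ) (hk : 2 ≤ k)
    (h2 : rho 2 f = rho 2 g) (hkdata : rho k f = rho k g) :
    {χ : AddChar G ℂ | fhat f χ ≠ 0} = {χ : AddChar G ℂ | fhat g χ ≠ 0} ∧
    ∀ (m n : ℕ) (x : Fin m → AddChar G ℂ) (y : Fin n → AddChar G ℂ),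
      m + n = k →
      (∀ i, fhat f (x i) ≠ 0) → (∀ j, fhat f (y j) ≠ 0) →
      (∏ i, x i) = (∏ j, y j) →
      (∏ i, fhat f (x i) / fhat g (x i)) = ∏ j, fhat f (y j) / fhat g (y j) := by
  have hsupp := fhat_ne_zero_iff_of_rho_two_eq h2
  refine ⟨Set.ext hsupp, ?_⟩
  rintro m n x y rfl hx hy hxy
  have hgx (i : Fin m) : fhat g (x i) ≠ 0 := (hsupp _).mp (hx i)
  have hgy (j : Fin n) : fhat g (y j) ≠ 0 := (hsupp _).mp (hy j)
  let χ : Fin (m + n) → AddChar G ℂ := Fin.append x fun j ↦ (y j)⁻¹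
  have hχ : ∏ i, χ i = 1 := by simp [χ, Fin.prod_univ_add, hxy]
  have hgχ : ∀ i, fhat g (χ i) ≠ 0 :=
    Fin.addCases (by simpa [χ] using hgx) (by simpa [χ, fhat_inv] using hgy)
  have hratio := prod_fhat_div_fhat_eq_one_of_rho_eq hkdata hχ hgχ
  simp only [χ, Fin.prod_univ_add, Fin.append_left, Fin.append_right,
    fhat_inv_div_fhat_inv_of_rho_two_eq h2 (hgy _), prod_inv_distrib] at hratio
  exact eq_of_mul_inv_eq_one hratio
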